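/- Let l ≥ 2 be an integer, let p ≥ 2 be an even integer, and let m be an integer with m ≥ pl/2. Then ∫_0^1 ( Σ_{A ⊆ {1,…,m}, #(A)=l} w_A(x) )^p dx ≥ (p! / (2^p · (3·l!)^{p/2})) · μ_{l,p}(standard) · m·(m−1)⋯(m−pl/2+1). -/

import Mathlib

/-!
Expanding the `p`-th power and using independence of the Rademacher functions, the integral is the
number of `p`-tuples of `l`-subsets of `{1, …, m}` that cover every point an even number of times
(`card_evenTuples_le_integral` proves the inequality that is needed). Among these are the tuples
obtained from a standard double-covering `C` by ordering its `p` members and relabelling its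
`pl/2` points injectively by elements of `{1, …, m}`; non-isomorphic collections give disjoint
sets of tuples (`muStandard_mul_le`). There are `p! · m(m-1)⋯(m-pl/2+1)` pairs (ordering,
relabelling), so it remains to bound the number of pairs giving one and the same tuple, that is,
the number of automorphisms of `C` acting on the indexed members and on the points.

That number is at most `2 ^ p * (l!) ^ (p / 2)`. As `C` is standard, an automorphism preserves
every connected component (`linked_of_automorphism`). Reveal the images of the members one at a
time, choosing whenever possible a member that meets an earlier one. Its image is then forced,
since a point lies in exactly two members; if `h` of its points are new, their images can be chosen
in at most `h!` ways, and `h! ≤ (l!) ^ (h / l)`. The numbers `h` add up to the `pl/2` points, so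
these choices contribute at most `(l!) ^ (p / 2)` (`agreeing_bound`, `card_le_of_linked`). The
first member of a component of size `q` has at most `q ≤ 2 ^ q` images, which contributes at most
`2 ^ p` altogether. The claim follows since `l! ≤ 3 · l!`.
-/

/-- The union of all member sets of a set-collection. -/
def unionC (C : Multiset (Finset ℕ)) : Finset ℕ := C.sup

/-- A set-collection is a double-covering if every point of its union lies in
exactly two member sets (counted with multiplicity). -/
def IsDoubleCover (C : Multiset (Finset ℕ)) : Prop :=
  ∀ a ∈ unionC C, Multiset.countP (fun A => a ∈ A) C = 2

/-- A set-collection is an even-covering if every point of its union lies in an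
even number of member sets (counted with multiplicity). -/
def IsEvenCover (C : Multiset (Finset ℕ)) : Prop :=
  ∀ a ∈ unionC C, Even (Multiset.countP (fun A => a ∈ A) C)

/-- Two set-collections are isomorphic: there is a bijection between their
unions mapping the first multiset of sets onto the second. -/
def Isomorphic (C D : Multiset (Finset ℕ)) : Prop :=
  ∃ φ : ℕ → ℕ, Set.BijOn φ ↑(unionC C) ↑(unionC D) ∧
    C.map (Finset.image φ) = D

/-- A set-collection is connected if any two member sets are joined by a chain
of member sets with consecutive nonempty intersections. -/
def ConnectedColl (C : Multiset (Finset ℕ)) : Prop :=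
  ∀ A ∈ C, ∀ B ∈ C,
    Relation.ReflTransGen (fun X Y => X ∈ C ∧ Y ∈ C ∧ (X ∩ Y).Nonempty) A B

/-- `D` is a connected component of `C`: a nonempty connected sub-multiset
separated from the rest of `C`. -/
def IsComponent (C D : Multiset (Finset ℕ)) : Prop :=
  D ≤ C ∧ D ≠ 0 ∧ ConnectedColl D ∧ ∀ B ∈ C - D, ∀ A ∈ D, B ∩ A = ∅

/-- A set-collection is standard if no two of its distinct connected components
are isomorphic. -/
def IsStandard (C : Multiset (Finset ℕ)) : Prop :=
  ∀ D E : Multiset (Finset ℕ),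
    IsComponent C D → IsComponent C E → D ≠ E → ¬ Isomorphic D E

/-- `μ_{l,p}(full)`: the number of isomorphism classes of double-coverings of
`p` sets each of cardinality `l`. -/
noncomputable def muFull (l p : ℕ) : ℕ :=
  Nat.card (Quot (fun C D : {C : Multiset (Finset ℕ) //
      Multiset.card C = p ∧ IsDoubleCover C ∧ ∀ A ∈ C, A.card = l} =>
    Isomorphic C.1 D.1))

/-- `μ_{l,p}(standard)`: the number of isomorphism classes of standard
double-coverings of `p` sets each of cardinality `l`. -/
noncomputable def muStandard (l p : ℕ) : ℕ :=
  Nat.card (Quot (fun C D : {C : Multiset (Finset ℕ) //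
      Multiset.card C = p ∧ IsDoubleCover C ∧ IsStandard C ∧ ∀ A ∈ C, A.card = l} =>
    Isomorphic C.1 D.1))

/-- `μ*_{l,p}(full)`: the number of isomorphism classes of double-coverings of
`p` sets each of cardinality between `1` and `l`. -/
noncomputable def muStarFull (l p : ℕ) : ℕ :=
  Nat.card (Quot (fun C D : {C : Multiset (Finset ℕ) //
      Multiset.card C = p ∧ IsDoubleCover C ∧ ∀ A ∈ C, 1 ≤ A.card ∧ A.card ≤ l} =>
    Isomorphic C.1 D.1))

/-- The family `D_{l,p}` of double-coverings of `p` sets of cardinality `l`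
contained in `{1,…,pl/2}`. -/
def Dfull (l p : ℕ) : Set (Multiset (Finset ℕ)) :=
  {C | Multiset.card C = p ∧ IsDoubleCover C ∧
    (∀ A ∈ C, A ⊆ Finset.Icc 1 (p * l / 2)) ∧ ∀ A ∈ C, A.card = l}

/-- The family `D*_{l,p}` of double-coverings of `p` sets of cardinality
between `1` and `l` contained in `{1,…,pl/2}`. -/
def Dstar (l p : ℕ) : Set (Multiset (Finset ℕ)) :=
  {C | Multiset.card C = p ∧ IsDoubleCover C ∧
    (∀ A ∈ C, A ⊆ Finset.Icc 1 (p * l / 2)) ∧ ∀ A ∈ C, 1 ≤ A.card ∧ A.card ≤ l}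

/-- The Rademacher function `r_n(x) = sign (sin (2^n π x))`. -/
noncomputable def rademacher (n : ℕ) (x : ℝ) : ℝ :=
  Real.sign (Real.sin (2 ^ n * Real.pi * x))

/-- The Walsh function `w_A = ∏_{k ∈ A} r_k`. -/
noncomputable def walsh (A : Finset ℕ) (x : ℝ) : ℝ :=
  ∏ k ∈ A, rademacher k x

/-! ### Counting relabellings of a double-covering -/

/-- Among factorials `h!` with `h ≤ l` the normalised logarithm `log h! / h` is largest at
`h = l`. -/
lemma factorial_pow_le {h l : ℕ} (hl : h ≤ l) :
    h.factorial ^ l ≤ l.factorial ^ h := by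
  induction l, hl using Nat.le_induction with
  | base => exact le_rfl
  | succ n hn ih =>
    rw [pow_succ, Nat.factorial_succ, mul_pow, mul_comm]
    refine Nat.mul_le_mul ?_ ih
    exact (Nat.factorial_le_pow h).trans (Nat.pow_le_pow_left (by omega) h)

section Counting

variable {V P Q : Type*} [Fintype V] [DecidableEq V] [Fintype P] [DecidableEq P]
  [DecidableEq Q]

/-- Two indices are linked if they are joined by a chain of indices whose sets consecutively
meet; the classes are the index sets of the connected components of the family `c`. -/
def Linked (c : V → Finset P) : V → V → Prop :=
  Relation.ReflTransGen fun i j => (c i ∩ c j).Nonempty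

omit [Fintype V] [DecidableEq V] [Fintype P] in
lemma Linked.symm {c : V → Finset P} {i j : V} (h : Linked c i j) : Linked c j i := by
  have : Std.Symm fun i j => (c i ∩ c j).Nonempty :=
    ⟨fun a b hab => by rwa [Finset.inter_comm]⟩
  exact Relation.ReflTransGen.stdSymm.symm _ _ h

omit [Fintype V] [DecidableEq V] [Fintype P] in
lemma Linked.trans {c : V → Finset P} {i j k : V} (h : Linked c i j) (h' : Linked c j k) :
    Linked c i k := Relation.ReflTransGen.trans h h'

open Classical in
/-- The members of `X` that agree with `x₀` on the indices in `S` and on all points of the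
corresponding sets. -/
noncomputable def agreeing (c : V → Finset P) (X : Finset (Equiv.Perm V × (P ↪ Q)))
    (S : Finset V) (x₀ : Equiv.Perm V × (P ↪ Q)) : Finset (Equiv.Perm V × (P ↪ Q)) :=
  X.filter fun x => ∀ j ∈ S, x.1 j = x₀.1 j ∧ ∀ a ∈ c j, x.2 a = x₀.2 a

open Classical in
/-- Once the image of the index `v` is known, the points of `c v` not covered by `S` can be sent
only to a permutation of a fixed set of points. -/
lemma card_restrict_le (c : V → Finset P) (X : Finset (Equiv.Perm V × (P ↪ Q)))
    (hX : ∀ x ∈ X, ∀ y ∈ X, ∀ j k, x.1 j = y.1 k → (c j).map x.2 = (c k).map y.2)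
    (S : Finset V) (v : V) (x₁ : Equiv.Perm V × (P ↪ Q)) (hx₁ : x₁ ∈ X)
    (Y : Finset (Equiv.Perm V × (P ↪ Q)))
    (hY : ∀ x ∈ Y, x ∈ agreeing c X S x₁ ∧ x.1 v = x₁.1 v) :
    (Y.image fun x => fun a : ↥((c v).filter fun a => ∀ s ∈ S, a ∉ c s) => x.2 a.1).card ≤
      (((c v).filter fun a => ∀ s ∈ S, a ∉ c s).card).factorial := by
  set T := (c v).filter fun a => ∀ s ∈ S, a ∉ c s with hT
  have hsub : (Y.image fun x => fun a : ↥T => x.2 a.1) ⊆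
      (Finset.univ : Finset (Equiv.Perm ↥T)).image fun π => fun a : ↥T => x₁.2 (π a).1 := by
    intro g hg
    obtain ⟨x, hx, rfl⟩ := Finset.mem_image.1 hg
    obtain ⟨hxa, hxv⟩ := hY x hx
    obtain ⟨hxX, hag⟩ := Finset.mem_filter.1 hxa
    have hmap := hX x hxX x₁ hx₁ v v hxv
    have key : ∀ a : ↥T, ∃ b : ↥T, x₁.2 b.1 = x.2 a.1 := by
      rintro ⟨a, ha⟩
      obtain ⟨hav, haS⟩ := Finset.mem_filter.1 ha
      have : x.2 a ∈ (c v).map x₁.2 := hmap ▸ Finset.mem_map_of_mem _ hav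
      obtain ⟨b, hb, hba⟩ := Finset.mem_map.1 this
      refine ⟨⟨b, Finset.mem_filter.2 ⟨hb, ?_⟩⟩, hba⟩
      -- a covered point `b` is already the image of `b` under `x`
      intro s hs hbs
      have h1 := (hag s hs).2 b hbs
      have : b = a := x.2.injective (h1.trans hba)
      exact haS s hs (this ▸ hbs)
    choose π hπ using key
    have hinj : Function.Injective π := by
      intro a b hab
      have : x.2 a.1 = x.2 b.1 := by rw [← hπ a, ← hπ b, hab]
      exact Subtype.ext (x.2.injective this)
    refine Finset.mem_image.2 ⟨Equiv.ofBijective π (Finite.injective_iff_bijective.1 hinj),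
      Finset.mem_univ _, ?_⟩
    funext a
    simpa using hπ a
  calc _ ≤ _ := Finset.card_le_card hsub
    _ ≤ _ := Finset.card_image_le
    _ = _ := by rw [Finset.card_univ, Fintype.card_perm, Fintype.card_coe]

open Classical in
/-- Revealing one more index `v`: if it has at most `B` possible images, then the number of
choices grows at most by the factor `B` times the factorial of the number of new points. -/
lemma card_agreeing_step (c : V → Finset P) (X : Finset (Equiv.Perm V × (P ↪ Q)))
    (hX : ∀ x ∈ X, ∀ y ∈ X, ∀ j k, x.1 j = y.1 k → (c j).map x.2 = (c k).map y.2)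
    (S : Finset V) (v : V) (x₀ : Equiv.Perm V × (P ↪ Q)) (M B : ℕ)
    (hM : ∀ x₁ ∈ X, (agreeing c X (insert v S) x₁).card ≤ M)
    (hB : ((agreeing c X S x₀).image fun x => x.1 v).card ≤ B) :
    (agreeing c X S x₀).card ≤
      M * (((c v).filter fun a => ∀ s ∈ S, a ∉ c s).card).factorial * B := by
  set T := (c v).filter fun a => ∀ s ∈ S, a ∉ c s with hT
  refine (Finset.card_le_mul_card_image (f := fun x : Equiv.Perm V × (P ↪ Q) => x.1 v) _
    (M * T.card.factorial) ?_).trans (Nat.mul_le_mul_left _ hB)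
  intro w hw
  obtain ⟨x₁, hx₁, rfl⟩ := Finset.mem_image.1 hw
  obtain ⟨hx₁X, hx₁a⟩ := Finset.mem_filter.1 hx₁
  have hY : ∀ x ∈ (agreeing c X S x₀).filter (fun x => x.1 v = x₁.1 v),
      x ∈ agreeing c X S x₁ ∧ x.1 v = x₁.1 v := by
    intro x hx
    obtain ⟨hx, hv⟩ := Finset.mem_filter.1 hx
    obtain ⟨hxX, hxa⟩ := Finset.mem_filter.1 hx
    refine ⟨Finset.mem_filter.2 ⟨hxX, fun j hj => ?_⟩, hv⟩
    refine ⟨(hxa j hj).1.trans (hx₁a j hj).1.symm, fun a ha => ?_⟩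
    exact ((hxa j hj).2 a ha).trans ((hx₁a j hj).2 a ha).symm
  refine (Finset.card_le_mul_card_image
    (f := fun x : Equiv.Perm V × (P ↪ Q) => fun a : ↥T => x.2 a.1) _ M ?_).trans
    (Nat.mul_le_mul_left _ (card_restrict_le c X hX S v x₁ hx₁X _ hY))
  intro g hg
  obtain ⟨x₂, hx₂, rfl⟩ := Finset.mem_image.1 hg
  obtain ⟨hx₂a, hx₂v⟩ := hY x₂ hx₂
  obtain ⟨hx₂X, hx₂a⟩ := Finset.mem_filter.1 hx₂a
  refine (Finset.card_le_card ?_).trans (hM x₂ hx₂X)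
  intro x hx
  obtain ⟨hx, hxT⟩ := Finset.mem_filter.1 hx
  obtain ⟨hxa, hxv⟩ := hY x hx
  obtain ⟨hxX, hxa⟩ := Finset.mem_filter.1 hxa
  refine Finset.mem_filter.2 ⟨hxX, fun j hj => ?_⟩
  have hS : ∀ j ∈ S, x.1 j = x₂.1 j ∧ ∀ a ∈ c j, x.2 a = x₂.2 a := fun j hj =>
    ⟨(hxa j hj).1.trans (hx₂a j hj).1.symm,
      fun a ha => ((hxa j hj).2 a ha).trans ((hx₂a j hj).2 a ha).symm⟩
  rcases Finset.mem_insert.1 hj with rfl | hj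
  · refine ⟨hxv.trans hx₂v.symm, fun a ha => ?_⟩
    by_cases haT : a ∈ T
    · exact congrFun hxT ⟨a, haT⟩
    · have : ∃ s ∈ S, a ∈ c s := by
        by_contra! hcon
        exact haT (Finset.mem_filter.2 ⟨ha, hcon⟩)
      obtain ⟨s, hs, has⟩ := this
      exact (hS s hs).2 a has
  · exact hS j hj

open Classical in
/-- The counting bound, by revealing the indices one at a time. Each new index is chosen, if
possible, to meet a set revealed before; its image is then forced. Otherwise it opens a new
linked class of size `q`, inside which its image has at most `q ≤ 2 ^ q` choices. -/
lemma agreeing_bound (c : V → Finset P) (X : Finset (Equiv.Perm V × (P ↪ Q))) (l : ℕ)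
    (hX : ∀ x ∈ X, ∀ y ∈ X, ∀ j k, x.1 j = y.1 k → (c j).map x.2 = (c k).map y.2)
    (hL : ∀ x ∈ X, ∀ y ∈ X, ∀ j k, x.1 j = y.1 k → Linked c j k)
    (hcard : ∀ j, (c j).card = l)
    (hdouble : ∀ a, (Finset.univ.filter fun j => a ∈ c j).card = 2) (n : ℕ) :
    ∀ S : Finset V, Sᶜ.card = n → ∃ M : ℕ,
      M ^ l ≤ 2 ^ (l * (Finset.univ.filter fun u => ∀ s ∈ S, ¬ Linked c s u).card) *
        l.factorial ^ (Finset.univ.filter fun a => ∀ s ∈ S, a ∉ c s).card ∧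
      ∀ x₀ ∈ X, (agreeing c X S x₀).card ≤ M := by
  induction n with
  | zero =>
    intro S hS
    have hSu : ∀ j, j ∈ S := by
      intro j
      by_contra hj
      have : j ∈ Sᶜ := Finset.mem_compl.2 hj
      rw [Finset.card_eq_zero.1 hS] at this
      simp at this
    refine ⟨1, ?_, fun x₀ hx₀ => ?_⟩
    · rw [one_pow]
      exact Nat.mul_pos (by positivity) (pow_pos (Nat.factorial_pos l) _)
    · rw [Finset.card_le_one]
      have key : ∀ x ∈ agreeing c X S x₀, x = x₀ := by
        intro x hx
        have hxa := (Finset.mem_filter.1 hx).2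
        refine Prod.ext (Equiv.ext fun j => (hxa j (hSu j)).1)
          (Function.Embedding.ext fun a => ?_)
        have : (Finset.univ.filter fun j => a ∈ c j).Nonempty := by
          rw [← Finset.card_pos, hdouble]; norm_num
        obtain ⟨j, hj⟩ := this
        exact (hxa j (hSu j)).2 a (Finset.mem_filter.1 hj).2
      intro x hx y hy
      rw [key x hx, key y hy]
  | succ n ih =>
    intro S hS
    -- one step of the exploration, for an index `v` with at most `B` possible images
    have step : ∀ v ∉ S, ∀ B : ℕ,
        (∀ x₀ ∈ X, ((agreeing c X S x₀).image fun x => x.1 v).card ≤ B) →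
        B ^ l * 2 ^ (l * (Finset.univ.filter fun u => ∀ s ∈ insert v S, ¬ Linked c s u).card) ≤
          2 ^ (l * (Finset.univ.filter fun u => ∀ s ∈ S, ¬ Linked c s u).card) →
        ∃ M : ℕ,
          M ^ l ≤ 2 ^ (l * (Finset.univ.filter fun u => ∀ s ∈ S, ¬ Linked c s u).card) *
            l.factorial ^ (Finset.univ.filter fun a => ∀ s ∈ S, a ∉ c s).card ∧
          ∀ x₀ ∈ X, (agreeing c X S x₀).card ≤ M := by
      intro v hv B hB hBl
      obtain ⟨M, hM, hMX⟩ := ih (insert v S) (by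
        rw [Finset.compl_insert, Finset.card_erase_of_mem (Finset.mem_compl.2 hv), hS]; rfl)
      set T := (c v).filter fun a => ∀ s ∈ S, a ∉ c s with hT
      have hTl : T.card ≤ l := (hcard v) ▸ Finset.card_filter_le _ _
      have hsplit : (Finset.univ.filter fun a => ∀ s ∈ S, a ∉ c s).card =
          (Finset.univ.filter fun a => ∀ s ∈ insert v S, a ∉ c s).card + T.card := by
        rw [← Finset.card_union_of_disjoint]
        · congr 1
          ext a
          simp only [Finset.mem_filter, Finset.mem_univ, true_and, Finset.mem_insert,
            forall_eq_or_imp, Finset.mem_union, hT]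
          tauto
        · rw [Finset.disjoint_left]
          intro a ha ha'
          exact (Finset.mem_filter.1 ha).2 v (Finset.mem_insert_self _ _)
            (Finset.mem_filter.1 ha').1
      refine ⟨M * T.card.factorial * B, ?_, fun x₀ hx₀ =>
        card_agreeing_step c X hX S v x₀ M B hMX (hB x₀ hx₀)⟩
      rw [hsplit, pow_add, mul_pow, mul_pow]
      refine (Nat.mul_le_mul_right _ (Nat.mul_le_mul hM (factorial_pow_le hTl))).trans ?_
      refine le_trans (le_of_eq ?_) (Nat.mul_le_mul_right _ hBl)
      ring
    by_cases hadj : ∃ v ∉ S, ∃ s ∈ S, (c s ∩ c v).Nonempty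
    · obtain ⟨v, hv, s, hs, a, ha⟩ := hadj
      obtain ⟨has, hav⟩ := Finset.mem_inter.1 ha
      refine step v hv 1 (fun x₀ hx₀ => ?_) ?_
      · -- `a` lies in exactly two sets, one of them indexed by `s`, so the image of `v` is forced
        have key : ∀ x ∈ agreeing c X S x₀, x.1 v = x₀.1 v := by
          intro x hx
          obtain ⟨hxX, hxa⟩ := Finset.mem_filter.1 hx
          obtain ⟨k, hk⟩ := x₀.1.surjective (x.1 v)
          have hmap := hX x hxX x₀ hx₀ v k hk.symm
          have hak : a ∈ c k := by
            have : x.2 a ∈ (c k).map x₀.2 := hmap ▸ Finset.mem_map_of_mem _ hav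
            rw [(hxa s hs).2 a has] at this
            exact (Finset.mem_map' _).1 this
          have hsv : s ≠ v := fun h => hv (h ▸ hs)
          have hks : k ≠ s := by
            rintro rfl
            rw [← (hxa k hs).1] at hk
            exact hsv (x.1.injective hk)
          have hkv : k = v := by
            by_contra hkv
            have h3 : ({k, s, v} : Finset V).card ≤ 2 := by
              rw [← hdouble a]
              refine Finset.card_le_card fun j hj => ?_
              simp only [Finset.mem_insert, Finset.mem_singleton] at hj
              rcases hj with rfl | rfl | rfl <;> simp [*]
            rw [Finset.card_eq_three.2 ⟨k, s, v, hks, hkv, hsv, rfl⟩] at h3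
            omega
          rw [← hk, hkv]
        rw [Finset.card_le_one]
        intro w hw w' hw'
        obtain ⟨x, hx, rfl⟩ := Finset.mem_image.1 hw
        obtain ⟨y, hy, rfl⟩ := Finset.mem_image.1 hw'
        rw [key x hx, key y hy]
      · rw [one_pow, one_mul]
        refine Nat.pow_le_pow_right (by norm_num) (Nat.mul_le_mul_left _ (Finset.card_le_card ?_))
        intro u hu
        simp only [Finset.mem_filter, Finset.mem_univ, true_and] at hu ⊢
        exact fun s hs => hu s (Finset.mem_insert_of_mem hs)
    · push Not at hadj
      have : Sᶜ.Nonempty := by rw [← Finset.card_pos, hS]; omega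
      obtain ⟨v, hv⟩ := this
      have hv := Finset.mem_compl.1 hv
      have hclosed : ∀ s ∈ S, ∀ u, Linked c s u → u ∈ S := by
        intro s hs u hsu
        induction hsu with
        | refl => exact hs
        | tail _ h ih =>
          by_contra hcon
          rw [hadj _ hcon _ ih] at h
          simp at h
      refine step v hv (Finset.univ.filter fun u => Linked c v u).card (fun x₀ hx₀ => ?_) ?_
      · refine (Finset.card_le_card (t := (Finset.univ.filter fun u => Linked c v u).image x₀.1)
          ?_).trans Finset.card_image_le
        intro w hw
        obtain ⟨x, hx, rfl⟩ := Finset.mem_image.1 hw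
        obtain ⟨hxX, hxa⟩ := Finset.mem_filter.1 hx
        obtain ⟨k, hk⟩ := x₀.1.surjective (x.1 v)
        refine Finset.mem_image.2 ⟨k, ?_, hk⟩
        simpa using hL x hxX x₀ hx₀ v k hk.symm
      · have hsplit : (Finset.univ.filter fun u => ∀ s ∈ S, ¬ Linked c s u).card =
            (Finset.univ.filter fun u => Linked c v u).card +
            (Finset.univ.filter fun u => ∀ s ∈ insert v S, ¬ Linked c s u).card := by
          rw [← Finset.card_union_of_disjoint]
          · congr 1
            ext u
            simp only [Finset.mem_filter, Finset.mem_univ, true_and, Finset.mem_insert,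
              forall_eq_or_imp, Finset.mem_union]
            constructor
            · intro h
              by_cases hvu : Linked c v u
              · exact Or.inl hvu
              · exact Or.inr ⟨hvu, h⟩
            · rintro (h | h)
              · exact fun s hs hsu => hv (hclosed s hs v (hsu.trans h.symm))
              · exact h.2
          · rw [Finset.disjoint_left]
            intro u hu hu'
            exact (Finset.mem_filter.1 hu').2 v (Finset.mem_insert_self _ _)
              (Finset.mem_filter.1 hu).2
        rw [hsplit, mul_add, pow_add]
        refine Nat.mul_le_mul_right _ ?_
        rw [mul_comm l, pow_mul]
        exact Nat.pow_le_pow_left Nat.lt_two_pow_self.le l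

open Classical in
/-- A family of `l`-sets that covers each point twice admits few relabellings that differ pairwise
by automorphisms preserving the linked classes. -/
lemma card_le_of_linked (c : V → Finset P) (X : Finset (Equiv.Perm V × (P ↪ Q))) (l r : ℕ)
    (hl : l ≠ 0)
    (hX : ∀ x ∈ X, ∀ y ∈ X, ∀ j k, x.1 j = y.1 k → (c j).map x.2 = (c k).map y.2)
    (hL : ∀ x ∈ X, ∀ y ∈ X, ∀ j k, x.1 j = y.1 k → Linked c j k)
    (hcard : ∀ j, (c j).card = l)
    (hdouble : ∀ a, (Finset.univ.filter fun j => a ∈ c j).card = 2)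
    (hP : Fintype.card P = r * l) :
    X.card ≤ 2 ^ Fintype.card V * l.factorial ^ r := by
  rcases X.eq_empty_or_nonempty with rfl | ⟨x₀, hx₀⟩
  · simp
  obtain ⟨M, hM, hMX⟩ := agreeing_bound c X l hX hL hcard hdouble _ ∅ rfl
  have h1 : X.card ≤ M := by
    have := hMX x₀ hx₀
    simpa [agreeing] using this
  refine h1.trans ?_
  simp only [Finset.notMem_empty, false_imp_iff, implies_true, Finset.filter_true,
    Finset.card_univ, hP] at hM
  rw [mul_comm l, pow_mul, pow_mul, ← mul_pow] at hM
  exact (Nat.pow_le_pow_iff_left hl).1 hM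

end Counting

/-! ### Rademacher functions and even tuples -/

lemma rademacher_measurable (n : ℕ) : Measurable (rademacher n) := by
  unfold rademacher
  have h : Measurable Real.sign := by
    unfold Real.sign
    exact Measurable.ite measurableSet_Iio measurable_const
      (Measurable.ite measurableSet_Ioi measurable_const measurable_const)
  exact h.comp (by fun_prop)

lemma rademacher_abs_le (n : ℕ) (x : ℝ) : |rademacher n x| ≤ 1 := by
  unfold rademacher
  rcases Real.sign_apply_eq (Real.sin (2 ^ n * Real.pi * x)) with h | h | h <;> simp [h]

lemma rademacher_succ (n : ℕ) (x : ℝ) : rademacher (n + 1) x = rademacher n (2 * x) := by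
  unfold rademacher
  congr 2
  ring

lemma rademacher_add_one (n : ℕ) (x : ℝ) : rademacher (n + 1) (x + 1) = rademacher (n + 1) x := by
  unfold rademacher
  have : (2 : ℝ) ^ (n + 1) * Real.pi * (x + 1) =
      2 ^ (n + 1) * Real.pi * x + ((2 ^ n : ℕ) : ℝ) * (2 * Real.pi) := by
    push_cast; ring
  rw [this, Real.sin_add_nat_mul_two_pi]

lemma rademacher_one_left {x : ℝ} (h0 : 0 < x) (h1 : x < 1 / 2) : rademacher 1 x = 1 := by
  unfold rademacher
  refine Real.sign_of_pos (Real.sin_pos_of_pos_of_lt_pi ?_ ?_)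
  · have := Real.pi_pos; positivity
  · nlinarith [Real.pi_pos]

lemma rademacher_one_right {x : ℝ} (h0 : 1 / 2 < x) (h1 : x < 1) : rademacher 1 x = -1 := by
  unfold rademacher
  refine Real.sign_of_neg ?_
  rw [← Real.sin_sub_two_pi]
  refine Real.sin_neg_of_neg_of_neg_pi_lt ?_ ?_ <;> nlinarith [Real.pi_pos]

lemma rademacher_prod_integrable (s : Finset ℕ) (d : ℕ → ℕ) (a b : ℝ) :
    IntervalIntegrable (fun x => ∏ k ∈ s, rademacher (k + 1) x ^ d k)
      MeasureTheory.volume a b := by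
  have hm : Measurable (fun x => ∏ k ∈ s, rademacher (k + 1) x ^ d k) :=
    Finset.measurable_fun_prod _ fun k _ => (rademacher_measurable (k + 1)).pow_const _
  refine (intervalIntegrable_const (c := (1 : ℝ))).mono_fun hm.aestronglyMeasurable ?_
  refine Filter.Eventually.of_forall fun x => ?_
  simp only [norm_one, norm_prod]
  refine Finset.prod_le_one (fun _ _ => norm_nonneg _) fun k _ => ?_
  rw [norm_pow]
  exact pow_le_one₀ (norm_nonneg _) (rademacher_abs_le _ _)

/-- Independence of the Rademacher functions: halving the interval separates the first factor
from the others, whose product is the next smaller instance run at double speed. -/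
lemma rademacher_prod_integral (n : ℕ) : ∀ d : ℕ → ℕ,
    ∫ x in (0:ℝ)..1, ∏ k ∈ Finset.range n, rademacher (k + 1) x ^ d k =
      ∏ k ∈ Finset.range n, (1 + (-1 : ℝ) ^ d k) / 2 := by
  induction n with
  | zero => intro d; simp
  | succ n ih =>
    intro d
    set H : ℝ → ℝ := fun y => ∏ k ∈ Finset.range n, rademacher (k + 1) y ^ d (k + 1) with hH
    have hprod : ∀ x, ∏ k ∈ Finset.range (n + 1), rademacher (k + 1) x ^ d k =
        H (2 * x) * rademacher 1 x ^ d 0 := by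
      intro x
      rw [Finset.prod_range_succ', hH]
      simp only [rademacher_succ (_ + 1), zero_add]
    have hper : ∀ y, H (y + 1) = H y := by
      intro y
      simp only [hH, rademacher_add_one]
    have hint := rademacher_prod_integrable (Finset.range (n + 1)) d
    rw [← intervalIntegral.integral_add_adjacent_intervals (hint 0 (1 / 2)) (hint (1 / 2) 1)]
    have hleft : ∫ x in (0:ℝ)..(1 / 2), ∏ k ∈ Finset.range (n + 1), rademacher (k + 1) x ^ d k =
        (∫ y in (0:ℝ)..1, H y) / 2 := by
      have h1 : ∫ x in (0:ℝ)..(1 / 2), ∏ k ∈ Finset.range (n + 1), rademacher (k + 1) x ^ d k =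
          ∫ x in (0:ℝ)..(1 / 2), H (2 * x) := by
        refine intervalIntegral.integral_congr_Ioo_of_le (by norm_num) fun x hx => ?_
        simp only [hprod, rademacher_one_left hx.1 hx.2, one_pow, mul_one]
      rw [h1, intervalIntegral.integral_comp_mul_left H (by norm_num : (2 : ℝ) ≠ 0)]
      norm_num
      ring
    have hright : ∫ x in (1 / 2 : ℝ)..1, ∏ k ∈ Finset.range (n + 1), rademacher (k + 1) x ^ d k =
        (-1) ^ d 0 * ((∫ y in (0:ℝ)..1, H y) / 2) := by
      have h1 : ∫ x in (1 / 2 : ℝ)..1, ∏ k ∈ Finset.range (n + 1), rademacher (k + 1) x ^ d k =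
          ∫ x in (1 / 2 : ℝ)..1, H (2 * x) * (-1) ^ d 0 := by
        refine intervalIntegral.integral_congr_Ioo_of_le (by norm_num) fun x hx => ?_
        simp only [hprod, rademacher_one_right hx.1 hx.2]
      have h2 : ∫ y in (1:ℝ)..2, H y = ∫ y in (0:ℝ)..1, H y := by
        have := intervalIntegral.integral_comp_add_right (a := 0) (b := 1) H 1
        simp only [hper] at this
        rw [this]
        norm_num
      rw [h1, intervalIntegral.integral_mul_const,
        intervalIntegral.integral_comp_mul_left H (by norm_num : (2 : ℝ) ≠ 0)]
      norm_num [h2]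
      ring
    rw [hleft, hright, hH, ih, Finset.prod_range_succ']
    ring

open Classical in
/-- The tuples of `l`-subsets of `{1, …, m}` that cover every point an even number of times. -/
noncomputable def evenTuples (l p m : ℕ) : Finset (Fin p → Finset ℕ) :=
  (Fintype.piFinset fun _ => Finset.powersetCard l (Finset.Icc 1 m)).filter
    fun A => ∀ k, Even (Finset.univ.filter fun i => k ∈ A i).card

/-- A product of Walsh functions integrates to `1` or `0`, and to `1` when every point is covered
an even number of times. -/
lemma card_evenTuples_le_integral (l p m : ℕ) :
    ((evenTuples l p m).card : ℝ) ≤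
      ∫ x in (0:ℝ)..1,
        (∑ A ∈ Finset.powersetCard l (Finset.Icc 1 m), walsh A x) ^ p := by
  set E := Fintype.piFinset fun _ : Fin p => Finset.powersetCard l (Finset.Icc 1 m) with hE
  have hprod : ∀ A ∈ E, ∀ x, ∏ i, walsh (A i) x =
      ∏ k ∈ Finset.range m, rademacher (k + 1) x ^
        (Finset.univ.filter fun i => k + 1 ∈ A i).card := by
    intro A hA x
    have h1 : ∀ i, walsh (A i) x =
        ∏ k ∈ Finset.range m, if k + 1 ∈ A i then rademacher (k + 1) x else 1 := by
      intro i
      have hsub := (Finset.mem_powersetCard.1 (Fintype.mem_piFinset.1 hA i)).1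
      rw [walsh, ← Finset.prod_filter]
      refine (Finset.prod_bij (fun k _ => k + 1) ?_ ?_ ?_ ?_).symm
      · intro k hk; exact (Finset.mem_filter.1 hk).2
      · intro a _ b _ h; omega
      · intro b hb
        have := Finset.mem_Icc.1 (hsub hb)
        exact ⟨b - 1, by simp; constructor; omega; rwa [Nat.sub_add_cancel this.1],
          by omega⟩
      · intro k _; rfl
    simp only [h1]
    rw [Finset.prod_comm]
    refine Finset.prod_congr rfl fun k _ => ?_
    rw [← Finset.prod_filter, Finset.prod_const]
  have hexp : ∀ x, (∑ A ∈ Finset.powersetCard l (Finset.Icc 1 m), walsh A x) ^ p =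
      ∑ A ∈ E, ∏ k ∈ Finset.range m, rademacher (k + 1) x ^
        (Finset.univ.filter fun i => k + 1 ∈ A i).card := by
    intro x
    have h := Finset.prod_univ_sum (fun _ : Fin p => Finset.powersetCard l (Finset.Icc 1 m))
      (fun _ A => walsh A x)
    rw [Finset.prod_const, Finset.card_univ, Fintype.card_fin] at h
    rw [h]
    exact Finset.sum_congr rfl fun A hA => hprod A hA x
  simp only [hexp]
  rw [intervalIntegral.integral_finsetSum fun A _ => rademacher_prod_integrable _ _ _ _]
  simp only [rademacher_prod_integral]
  rw [evenTuples, Finset.card_filter, Nat.cast_sum]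
  refine Finset.sum_le_sum fun A _ => ?_
  split_ifs with h
  · refine le_of_eq ?_
    rw [Finset.prod_eq_one]
    · simp
    · intro k _
      rw [(h (k + 1)).neg_one_pow]
      norm_num
  · rw [Nat.cast_zero]
    refine Finset.prod_nonneg fun k _ => ?_
    rcases neg_one_pow_eq_or ℝ (Finset.univ.filter fun i => k + 1 ∈ A i).card with h | h <;>
      rw [h] <;> norm_num

/-! ### Isomorphisms and components of set-collections -/

lemma mem_unionC {C : Multiset (Finset ℕ)} {a : ℕ} : a ∈ unionC C ↔ ∃ A ∈ C, a ∈ A := by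
  unfold unionC
  induction C using Multiset.induction_on with
  | empty => simp
  | cons A C ih => simp [ih]

lemma subset_unionC {C : Multiset (Finset ℕ)} {A : Finset ℕ} (h : A ∈ C) : A ⊆ unionC C :=
  fun _ ha => mem_unionC.2 ⟨A, h, ha⟩

lemma Isomorphic.trans {C D E : Multiset (Finset ℕ)} (h : Isomorphic C D) (h' : Isomorphic D E) :
    Isomorphic C E := by
  obtain ⟨φ, hφ, rfl⟩ := h
  obtain ⟨ψ, hψ, rfl⟩ := h'
  refine ⟨ψ ∘ φ, hψ.comp hφ, ?_⟩
  rw [Multiset.map_map]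
  exact Multiset.map_congr rfl fun A _ => by simp [Finset.image_image]

lemma Isomorphic.symm {C D : Multiset (Finset ℕ)} (h : Isomorphic C D) : Isomorphic D C := by
  obtain ⟨φ, hφ, hD⟩ := h
  have hinv := hφ.invOn_invFunOn
  refine ⟨Function.invFunOn φ ↑(unionC C), Set.BijOn.symm hinv.symm hφ, ?_⟩
  rw [← hD, Multiset.map_map]
  conv_rhs => rw [← Multiset.map_id C]
  refine Multiset.map_congr rfl fun A hA => ?_
  rw [Function.comp_apply, Finset.image_image, id]
  conv_rhs => rw [← Finset.image_id (s := A)]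
  exact Finset.image_congr fun a ha => hinv.1 (subset_unionC hA ha)

lemma isomorphic_map {C : Multiset (Finset ℕ)} {φ : ℕ → ℕ} (hφ : Set.InjOn φ ↑(unionC C)) :
    Isomorphic C (C.map (Finset.image φ)) := by
  refine ⟨φ, ?_, rfl⟩
  have : (↑(unionC (C.map (Finset.image φ))) : Set ℕ) = φ '' ↑(unionC C) := by
    ext b
    simp only [Finset.mem_coe, mem_unionC, Multiset.mem_map, Set.mem_image]
    constructor
    · rintro ⟨_, ⟨A, hA, rfl⟩, hb⟩
      obtain ⟨a, ha, rfl⟩ := Finset.mem_image.1 hb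
      exact ⟨a, ⟨A, hA, ha⟩, rfl⟩
    · rintro ⟨a, ⟨A, hA, ha⟩, rfl⟩
      exact ⟨_, ⟨A, hA, rfl⟩, Finset.mem_image_of_mem _ ha⟩
  rw [this]
  exact hφ.bijOn_image

section Components

variable {V : Type*} [Fintype V]

open Classical in
/-- The subcollection formed by the sets whose indices are linked to `i`. -/
noncomputable def classColl (c : V → Finset ℕ) (i : V) : Multiset (Finset ℕ) :=
  (Finset.univ.filter (Linked c i)).val.map c

lemma mem_classColl {c : V → Finset ℕ} {i : V} {A : Finset ℕ} :
    A ∈ classColl c i ↔ ∃ j, Linked c i j ∧ c j = A := by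
  simp [classColl]

lemma isComponent_classColl (c : V → Finset ℕ) (i : V) :
    IsComponent (Finset.univ.val.map c) (classColl c i) := by
  classical
  refine ⟨Multiset.map_le_map (Finset.val_le_iff.2 (Finset.filter_subset _ _)), ?_, ?_, ?_⟩
  · intro h
    have : c i ∈ classColl c i := mem_classColl.2 ⟨i, Relation.ReflTransGen.refl, rfl⟩
    rw [h] at this
    simp at this
  · intro A hA B hB
    obtain ⟨a, ha, rfl⟩ := mem_classColl.1 hA
    obtain ⟨b, hb, rfl⟩ := mem_classColl.1 hB
    have hab : Linked c a b := ha.symm.trans hb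
    clear hB hb
    induction hab with
    | refl => exact Relation.ReflTransGen.refl
    | tail h1 h2 ih =>
      refine ih.tail ⟨mem_classColl.2 ⟨_, ha.trans h1, rfl⟩,
        mem_classColl.2 ⟨_, (ha.trans h1).trans (Relation.ReflTransGen.single h2), rfl⟩, h2⟩
  · intro B hB A hA
    have hsplit : Finset.univ.val.map c = classColl c i +
        (Finset.univ.filter fun j => ¬ Linked c i j).val.map c := by
      rw [classColl, ← Multiset.map_add, Finset.filter_val, Finset.filter_val,
        Multiset.filter_add_not]
    rw [hsplit, add_tsub_cancel_left] at hB
    obtain ⟨b, hb, rfl⟩ := Multiset.mem_map.1 hB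
    obtain ⟨a, ha, rfl⟩ := mem_classColl.1 hA
    have hb : ¬ Linked c i b := by simpa using hb
    by_contra hne
    have hne := Finset.nonempty_iff_ne_empty.2 hne
    rw [Finset.inter_comm] at hne
    exact hb (ha.trans (Relation.ReflTransGen.single hne))

/-- An automorphism of a standard collection maps each connected component to itself, as it would
otherwise exhibit two distinct isomorphic components. -/
lemma linked_of_automorphism (c : V → Finset ℕ) (hstd : IsStandard (Finset.univ.val.map c))
    (hne : ∀ j, (c j).Nonempty) (α : Equiv.Perm V) (φ : ℕ → ℕ)
    (hφ : Set.InjOn φ ↑(unionC (Finset.univ.val.map c)))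
    (hα : ∀ j, (c j).image φ = c (α j)) (v : V) : Linked c v (α v) := by
  classical
  by_contra hv
  have hU : ∀ j a, a ∈ c j → a ∈ unionC (Finset.univ.val.map c) := fun j a ha =>
    subset_unionC (Multiset.mem_map_of_mem _ (Finset.mem_univ j)) ha
  have hadj : ∀ i j, (c (α i) ∩ c (α j)).Nonempty ↔ (c i ∩ c j).Nonempty := by
    intro i j
    rw [← hα, ← hα]
    constructor
    · rintro ⟨b, hb⟩
      obtain ⟨h1, h2⟩ := Finset.mem_inter.1 hb
      obtain ⟨a, ha, rfl⟩ := Finset.mem_image.1 h1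
      obtain ⟨a', ha', haa⟩ := Finset.mem_image.1 h2
      have := hφ (hU j a' ha') (hU i a ha) haa
      exact ⟨a, Finset.mem_inter.2 ⟨ha, this ▸ ha'⟩⟩
    · rintro ⟨a, ha⟩
      obtain ⟨h1, h2⟩ := Finset.mem_inter.1 ha
      exact ⟨φ a, Finset.mem_inter.2 ⟨Finset.mem_image_of_mem _ h1, Finset.mem_image_of_mem _ h2⟩⟩
  have hlink : ∀ i j, Linked c (α i) (α j) ↔ Linked c i j := by
    intro i j
    constructor
    · intro h
      have := Relation.ReflTransGen.lift (p := fun i j => (c i ∩ c j).Nonempty) α.symm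
        (fun a b hab => by
          change (c (α.symm a) ∩ c (α.symm b)).Nonempty
          rw [← hadj]; simpa using hab) _ _ h
      simp only [Function.onFun, Equiv.symm_apply_apply] at this
      exact this
    · intro h
      exact Relation.ReflTransGen.lift (p := fun i j => (c i ∩ c j).Nonempty) α
        (fun a b hab => (hadj a b).2 hab) _ _ h
  have hmap : (classColl c v).map (Finset.image φ) = classColl c (α v) := by
    have : Finset.univ.filter (Linked c (α v)) =
        (Finset.univ.filter (Linked c v)).map α.toEmbedding := by
      ext u
      obtain ⟨j, rfl⟩ := α.surjective u
      simp [hlink]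
    rw [classColl, classColl, this, Finset.map_val, Multiset.map_map, Multiset.map_map]
    exact Multiset.map_congr rfl fun j _ => hα j
  refine hstd _ _ (isComponent_classColl c v) (isComponent_classColl c (α v)) ?_ ?_
  · intro heq
    have : c v ∈ classColl c v := mem_classColl.2 ⟨v, Relation.ReflTransGen.refl, rfl⟩
    rw [heq] at this
    obtain ⟨j, hj, hjv⟩ := mem_classColl.1 this
    have hvj : Linked c v j := Relation.ReflTransGen.single (by
      rw [hjv, Finset.inter_self]; exact hne v)
    exact hv (hvj.trans hj.symm)
  · rw [← hmap]
    refine isomorphic_map (hφ.mono ?_)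
    intro a ha
    obtain ⟨A, hA, haA⟩ := mem_unionC.1 ha
    obtain ⟨j, _, rfl⟩ := mem_classColl.1 hA
    exact hU j a haA

end Components

/-! ### Even tuples isomorphic to a given standard double-covering -/

lemma exists_indexing {p : ℕ} (C : Multiset (Finset ℕ)) (hC : Multiset.card C = p) :
    ∃ c : Fin p → Finset ℕ, Finset.univ.val.map c = C := by
  obtain ⟨L, rfl⟩ := Quot.exists_rep C
  have hL : L.length = p := hC
  subst hL
  refine ⟨L.get, ?_⟩
  rw [Fin.univ_val_map, List.ofFn_get]
  rfl

open Classical in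
/-- Relabelling the points of `C` by elements of `{1, …, m}` and ordering its members produces
even tuples isomorphic to `C`; each is obtained at most `2 ^ p * (l!) ^ (p / 2)` times. -/
lemma card_isomorphic_tuples (l p m : ℕ) (hl : 2 ≤ l) (hpe : Even p) (C : Multiset (Finset ℕ))
    (hp : Multiset.card C = p) (hdc : IsDoubleCover C) (hstd : IsStandard C)
    (hcard : ∀ A ∈ C, A.card = l) :
    p.factorial * m.descFactorial (p * l / 2) ≤ 2 ^ p * l.factorial ^ (p / 2) *
      ((evenTuples l p m).filter fun A => Isomorphic C (Finset.univ.val.map A)).card := by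
  obtain ⟨c, rfl⟩ := exists_indexing C hp
  set U := unionC (Finset.univ.val.map c) with hU
  have hmem : ∀ j, c j ∈ Finset.univ.val.map c := fun j =>
    Multiset.mem_map_of_mem _ (Finset.mem_univ j)
  have hcU : ∀ j a, a ∈ c j → a ∈ U := fun j a ha => subset_unionC (hmem j) ha
  set c' : Fin p → Finset ↥U := fun j => (c j).subtype (· ∈ U) with hc'
  have hmem' : ∀ j (a : ↥U), a ∈ c' j ↔ a.1 ∈ c j := fun j a => by simp [hc']
  have hcard' : ∀ j, (c' j).card = l := by
    intro j
    rw [hc', Finset.card_subtype, Finset.filter_true_of_mem (hcU j), hcard _ (hmem j)]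
  have hdouble : ∀ a, (Finset.univ.filter fun j => a ∈ c' j).card = 2 := by
    intro a
    have := hdc a.1 a.2
    rw [Multiset.countP_map] at this
    rw [← this]
    simp only [hmem']
    rfl
  have hP : Fintype.card ↥U = p / 2 * l := by
    have h1 : ∑ j, (c' j).card = ∑ a : ↥U, (Finset.univ.filter fun j => a ∈ c' j).card := by
      have := Finset.sum_card_bipartiteAbove_eq_sum_card_bipartiteBelow
        (s := (Finset.univ : Finset (Fin p))) (t := (Finset.univ : Finset ↥U))
        (fun j a => a ∈ c' j)
      simp only [Finset.bipartiteAbove, Finset.bipartiteBelow] at this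
      rw [← this]
      exact Finset.sum_congr rfl fun j _ => by congr 1; ext a; simp
    simp only [hcard', hdouble, Finset.sum_const, Finset.card_univ, Fintype.card_fin,
      smul_eq_mul] at h1
    obtain ⟨r, rfl⟩ := hpe
    have : (r + r) / 2 = r := by omega
    rw [this]
    linarith
  have hN : p * l / 2 = Fintype.card ↥U := by
    rw [hP]
    obtain ⟨r, rfl⟩ := hpe
    have h1 : (r + r) / 2 = r := by omega
    have h2 : (r + r) * l = 2 * (r * l) := by ring
    rw [h1, h2, Nat.mul_div_cancel_left _ (by norm_num)]
  set F : Equiv.Perm (Fin p) × (↥U ↪ ↥(Finset.Icc 1 m)) → Fin p → Finset ℕ := fun x i =>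
    ((c' (x.1.symm i)).map x.2).map (Function.Embedding.subtype _) with hF
  have hdom : (Finset.univ : Finset (Equiv.Perm (Fin p) × (↥U ↪ ↥(Finset.Icc 1 m)))).card =
      p.factorial * m.descFactorial (p * l / 2) := by
    rw [hN, Finset.card_univ, Fintype.card_prod, Fintype.card_perm, Fintype.card_fin,
      Fintype.card_embedding_eq, Fintype.card_coe, Fintype.card_coe, Nat.card_Icc,
      Nat.add_sub_cancel]
  rw [← hdom]
  refine (Finset.card_le_mul_card_image (f := F) _ (2 ^ p * l.factorial ^ (p / 2)) ?_).trans
    (Nat.mul_le_mul_left _ (Finset.card_le_card ?_))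
  · intro A _
    set X := Finset.univ.filter fun x => F x = A with hXdef
    have hX : ∀ x ∈ X, ∀ y ∈ X, ∀ j k, x.1 j = y.1 k → (c' j).map x.2 = (c' k).map y.2 := by
      intro x hx y hy j k hjk
      have hxy : F x = F y := (Finset.mem_filter.1 hx).2.trans (Finset.mem_filter.1 hy).2.symm
      have := congrFun hxy (x.1 j)
      simp only [hF, Equiv.symm_apply_apply] at this
      rw [hjk, Equiv.symm_apply_apply] at this
      exact Finset.map_injective _ this
    have key := card_le_of_linked c' X l (p / 2) (by omega) hX ?_ hcard' hdouble hP
    · rwa [Fintype.card_fin] at key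
    -- two elements of a fibre differ by an automorphism of the collection
    intro x hx y hy j k hjk
    set α : Equiv.Perm (Fin p) := x.1.trans y.1.symm with hα
    have hmap : ∀ j, (c' j).map x.2 = (c' (α j)).map y.2 := fun j =>
      hX x hx y hy j (α j) (by simp [hα])
    have hex : ∀ a, ∃ b, y.2 b = x.2 a := by
      intro a
      have : (Finset.univ.filter fun j => a ∈ c' j).Nonempty := by
        rw [← Finset.card_pos, hdouble]; norm_num
      obtain ⟨j, hj⟩ := this
      have h : x.2 a ∈ (c' (α j)).map y.2 :=
        hmap j ▸ Finset.mem_map_of_mem _ (Finset.mem_filter.1 hj).2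
      obtain ⟨b, _, hb⟩ := Finset.mem_map.1 h
      exact ⟨b, hb⟩
    choose ψ hψ using hex
    have hψinj : Function.Injective ψ := by
      intro a b hab
      apply x.2.injective
      rw [← hψ a, ← hψ b, hab]
    set φ : ℕ → ℕ := fun n => if h : n ∈ U then (ψ ⟨n, h⟩).1 else n with hφ
    have hφU : ∀ n (h : n ∈ U), φ n = (ψ ⟨n, h⟩).1 := fun n h => by simp [hφ, h]
    have hφinj : Set.InjOn φ ↑U := by
      intro a ha b hb hab
      rw [hφU a ha, hφU b hb] at hab
      exact congrArg Subtype.val (hψinj (Subtype.ext hab))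
    have haut : ∀ j, (c j).image φ = c (α j) := by
      intro j
      refine Finset.eq_of_subset_of_card_le ?_ ?_
      · intro b hb
        obtain ⟨a, ha, rfl⟩ := Finset.mem_image.1 hb
        have haU := hcU j a ha
        rw [hφU a haU, ← hmem']
        have h : x.2 ⟨a, haU⟩ ∈ (c' (α j)).map y.2 :=
          hmap j ▸ Finset.mem_map_of_mem _ ((hmem' _ _).2 ha)
        rw [← hψ] at h
        exact (Finset.mem_map' _).1 h
      · rw [Finset.card_image_of_injOn (hφinj.mono (hcU j)), hcard _ (hmem _), hcard _ (hmem _)]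
    have hlink := linked_of_automorphism c hstd (fun j => by
      rw [← Finset.card_pos, hcard _ (hmem j)]; omega) α φ hφinj haut j
    have hk : k = α j := by simp [hα, hjk]
    rw [hk]
    refine Relation.ReflTransGen.mono ?_ _ _ hlink
    rintro i i' ⟨a, ha⟩
    obtain ⟨h1, h2⟩ := Finset.mem_inter.1 ha
    exact ⟨⟨a, hcU i a h1⟩, Finset.mem_inter.2 ⟨(hmem' _ _).2 h1, (hmem' _ _).2 h2⟩⟩
  · intro A hA
    obtain ⟨x, _, rfl⟩ := Finset.mem_image.1 hA
    have hFmem : ∀ i (a : ↥U), (x.2 a).1 ∈ F x i ↔ a ∈ c' (x.1.symm i) := by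
      intro i a
      refine (Finset.mem_map' (Function.Embedding.subtype _)).trans (Finset.mem_map' x.2)
    refine Finset.mem_filter.2 ⟨Finset.mem_filter.2 ⟨?_, fun k => ?_⟩, ?_⟩
    · refine Fintype.mem_piFinset.2 fun i => Finset.mem_powersetCard.2 ⟨?_, ?_⟩
      · intro k hk
        obtain ⟨q, _, rfl⟩ := Finset.mem_map.1 hk
        exact q.2
      · simp only [hF, Finset.card_map, hcard']
    · by_cases hk : ∃ a, (x.2 a).1 = k
      · obtain ⟨a, rfl⟩ := hk
        have : (Finset.univ.filter fun i => (x.2 a).1 ∈ F x i) =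
            (Finset.univ.filter fun j => a ∈ c' j).map x.1.toEmbedding := by
          ext i
          obtain ⟨j, rfl⟩ := x.1.surjective i
          simp [hFmem]
        rw [this, Finset.card_map, hdouble]
        exact even_two
      · rw [Finset.filter_false_of_mem]
        · simp
        · intro i _ hi
          obtain ⟨q, hq, rfl⟩ := Finset.mem_map.1 hi
          obtain ⟨a, _, rfl⟩ := Finset.mem_map.1 hq
          exact hk ⟨a, rfl⟩
    · set φ : ℕ → ℕ := fun n => if h : n ∈ U then (x.2 ⟨n, h⟩).1 else n with hφ
      have hφU : ∀ n (h : n ∈ U), φ n = (x.2 ⟨n, h⟩).1 := fun n h => by simp [hφ, h]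
      have hφinj : Set.InjOn φ ↑U := by
        intro a ha b hb hab
        rw [hφU a ha, hφU b hb] at hab
        exact congrArg Subtype.val (x.2.injective (Subtype.ext hab))
      have himg : ∀ j, (c j).image φ = F x (x.1 j) := by
        intro j
        ext b
        simp only [hF, Equiv.symm_apply_apply, Finset.mem_image, Finset.mem_map]
        constructor
        · rintro ⟨a, ha, rfl⟩
          exact ⟨_, ⟨⟨a, hcU j a ha⟩, (hmem' _ _).2 ha, rfl⟩, (hφU a _).symm⟩
        · rintro ⟨_, ⟨a, ha, rfl⟩, rfl⟩
          exact ⟨a.1, (hmem' _ _).1 ha, hφU a.1 a.2⟩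
      have hms : Finset.univ.val.map (F x) =
          (Finset.univ.val.map c).map (Finset.image φ) := by
        have hperm : Finset.univ.val.map (F x) =
            (Finset.univ.map x.1.toEmbedding).val.map (F x) := by rw [Finset.map_univ_equiv]
        rw [hperm, Finset.map_val, Multiset.map_map, Multiset.map_map]
        exact Multiset.map_congr rfl fun j _ => (himg j).symm
      rw [hms]
      exact isomorphic_map hφinj

/-- The isomorphism classes contribute disjoint sets of even tuples. -/
lemma muStandard_mul_le (l p m : ℕ) (hl : 2 ≤ l) (hpe : Even p) :
    muStandard l p * (p.factorial * m.descFactorial (p * l / 2)) ≤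
      2 ^ p * l.factorial ^ (p / 2) * (evenTuples l p m).card := by
  classical
  unfold muStandard
  set T := Quot (fun C D : {C : Multiset (Finset ℕ) //
      Multiset.card C = p ∧ IsDoubleCover C ∧ IsStandard C ∧ ∀ A ∈ C, A.card = l} =>
    Isomorphic C.1 D.1) with hT
  -- `Nat.card` of an infinite type is `0`, which makes that case trivial
  rcases finite_or_infinite T with hfin | hinf
  swap
  · rw [Nat.card_eq_zero_of_infinite, zero_mul]
    exact Nat.zero_le _
  have := Fintype.ofFinite T
  set S : T → Finset (Fin p → Finset ℕ) := fun t =>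
    (evenTuples l p m).filter fun A => Isomorphic (Quot.out t).1 (Finset.univ.val.map A) with hS
  have hdisj : ∀ t ∈ (Finset.univ : Finset T), ∀ t' ∈ (Finset.univ : Finset T), t ≠ t' →
      Disjoint (S t) (S t') := by
    intro t _ t' _ hne
    rw [Finset.disjoint_left]
    intro A hA hA'
    have h := (Finset.mem_filter.1 hA).2.trans (Finset.mem_filter.1 hA').2.symm
    apply hne
    rw [← Quot.out_eq t, ← Quot.out_eq t']
    exact Quot.sound h
  have hsum : ∑ t, (S t).card ≤ (evenTuples l p m).card := by
    rw [← Finset.card_biUnion hdisj]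
    exact Finset.card_le_card (Finset.biUnion_subset.2 fun t _ => Finset.filter_subset _ _)
  refine le_trans ?_ (Nat.mul_le_mul_left _ hsum)
  rw [Finset.mul_sum, Nat.card_eq_fintype_card, ← Finset.card_univ, ← smul_eq_mul,
    ← Finset.sum_const]
  refine Finset.sum_le_sum fun t _ => ?_
  obtain ⟨h1, h2, h3, h4⟩ := (Quot.out t).2
  exact card_isomorphic_tuples l p m hl hpe _ h1 h2 h3 h4

/-- for `l ≥ 2`, even `p ≥ 2` and `m ≥ pl/2`,
`∫_0^1 (Σ_{A ⊆ {1,…,m}, #A = l} w_A)^p ≥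
  (p!/(2^p (3·l!)^{p/2})) μ_{l,p}(standard) · m(m-1)⋯(m-pl/2+1)`. -/
theorem stmt19 (l p m : ℕ) (hl : 2 ≤ l) (hp : 2 ≤ p) (hpe : Even p)
    (hm : p * l / 2 ≤ m) :
    (Nat.factorial p : ℝ) /
        ((2 : ℝ) ^ p * ((3 * Nat.factorial l : ℕ) : ℝ) ^ (p / 2)) *
        (muStandard l p : ℝ) * (Nat.descFactorial m (p * l / 2) : ℝ) ≤
      ∫ x in (0:ℝ)..1,
        (∑ A ∈ Finset.powersetCard l (Finset.Icc 1 m), walsh A x) ^ p := by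
  refine le_trans ?_ (card_evenTuples_le_integral l p m)
  have hpos : (0 : ℝ) < (2 : ℝ) ^ p * ((3 * Nat.factorial l : ℕ) : ℝ) ^ (p / 2) := by
    have := Nat.factorial_pos l
    positivity
  rw [div_mul_eq_mul_div, div_mul_eq_mul_div, div_le_iff₀ hpos]
  have hle : l.factorial ^ (p / 2) ≤ (3 * l.factorial) ^ (p / 2) :=
    Nat.pow_le_pow_left (by omega) _
  have h := (muStandard_mul_le l p m hl hpe).trans
    (Nat.mul_le_mul_right _ (Nat.mul_le_mul_left (2 ^ p) hle))
  have h' : p.factorial * muStandard l p * m.descFactorial (p * l / 2) ≤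
      (evenTuples l p m).card * (2 ^ p * (3 * l.factorial) ^ (p / 2)) := by
    linarith [h]
  exact_mod_cast h'
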